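/- Let a > 0 and l, l' be real numbers, and for x ∈ (0, πa) define the Pöschl–Teller superpotential W_{l,l'}(x) = −(1/(2a))·( l·cot(x/(2a)) − l'·tan(x/(2a)) ). Then for every x ∈ (0, πa) the shape invariance relation holds: W_{l,l'}(x)² + W_{l,l'}'(x) = W_{l+1,l'+1}(x)² − W_{l+1,l'+1}'(x) + (l + l' + 1)/a². Equivalently, the SUSY partner potentials V₂(x; l, l') = W_{l,l'}² + W_{l,l'}' and V₁(x; l, l') = W_{l,l'}² − W_{l,l'}' satisfy V₂(x; l, l') = V₁(x; l+1, l'+1) + (l + l' + 1)/a², so the Pöschl–Teller potentials of first type are shape invariant with parameter shift (l, l') → (l+1, l'+1) and remainder R = (l + l' + 1)/a². -/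

import Mathlib

open Real

/-!
Up to the factor `k = 1 / (2a)` from rescaling the argument, `cot` and `tan` solve the Riccati
equations `c' = -(1 + c²)` and `t' = 1 + t²`. Hence `W_{l,l'} = -k (l c - l' t)` has derivative
`k² (l (1 + c²) + l' (1 + t²))`, so both `W_{l,l'}² + W_{l,l'}'` and
`W_{l+1,l'+1}² - W_{l+1,l'+1}'` have the `c²` and `t²` terms `k² (l (l + 1) c² + l' (l' + 1) t²)`,
and `c t = 1` makes the remaining terms constant.
-/

theorem hasDerivAt_tan_riccati {x : ℝ} (hx : cos x ≠ 0) :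
    HasDerivAt tan (1 + tan x ^ 2) x := by
  refine (hasDerivAt_tan hx).congr_deriv ?_
  rw [← inv_one_add_tan_sq hx, one_div, inv_inv]

theorem hasDerivAt_cot_riccati {x : ℝ} (hx : sin x ≠ 0) :
    HasDerivAt cot (-(1 + cot x ^ 2)) x := by
  have cot_eq : cot = fun y => cos y / sin y := funext cot_eq_cos_div_sin
  rw [cot_eq]
  refine ((hasDerivAt_cos x).div (hasDerivAt_sin x) hx).congr_deriv ?_
  field_simp
  ring

theorem cot_mul_tan {x : ℝ} (hs : sin x ≠ 0) (hc : cos x ≠ 0) : cot x * tan x = 1 := by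
  rw [cot_eq_cos_div_sin, tan_eq_sin_div_cos, div_mul_div_cancel₀ hs, div_self hc]

theorem sin_div_ne_zero_iff {a x : ℝ} :
    sin (x / a) ≠ 0 ↔ sin (x / (2 * a)) ≠ 0 ∧ cos (x / (2 * a)) ≠ 0 := by
  have double_angle : x / a = 2 * (x / (2 * a)) := by ring
  rw [double_angle, sin_two_mul, mul_ne_zero_iff, mul_ne_zero_iff_left two_ne_zero]

/-- The SUSY superpotential `W_{l,l'}` of the Pöschl–Teller potential of first type, as a function
on all of `ℝ`. It is meaningful where `sin (x / a) ≠ 0`; at the other points `cot` or `tan` takes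
the junk value `0`. -/
noncomputable def poschlTellerSuperpotential (a l l' x : ℝ) : ℝ :=
  -(1 / (2 * a)) * (l * cot (x / (2 * a)) - l' * tan (x / (2 * a)))

theorem hasDerivAt_poschlTellerSuperpotential {a x : ℝ} (l l' : ℝ) (hx : sin (x / a) ≠ 0) :
    HasDerivAt (poschlTellerSuperpotential a l l')
      ((1 / (2 * a)) ^ 2 *
        (l * (1 + cot (x / (2 * a)) ^ 2) + l' * (1 + tan (x / (2 * a)) ^ 2))) x := by
  obtain ⟨hs, hc⟩ := sin_div_ne_zero_iff.1 hx
  have hscale : HasDerivAt (fun y => y / (2 * a)) (1 / (2 * a)) x :=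
    (hasDerivAt_id x).div_const (2 * a)
  have hcot := (hasDerivAt_cot_riccati hs).comp x hscale
  have htan := (hasDerivAt_tan_riccati hc).comp x hscale
  refine (((hcot.const_mul l).sub (htan.const_mul l')).const_mul (-(1 / (2 * a)))).congr_deriv ?_
  ring

theorem poschlTeller_shape_invariance_general {a x : ℝ} (l l' : ℝ) (hx : sin (x / a) ≠ 0) :
    poschlTellerSuperpotential a l l' x ^ 2 + deriv (poschlTellerSuperpotential a l l') x
      = poschlTellerSuperpotential a (l + 1) (l' + 1) x ^ 2
        - deriv (poschlTellerSuperpotential a (l + 1) (l' + 1)) x + (l + l' + 1) / a ^ 2 := by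
  obtain ⟨hs, hc⟩ := sin_div_ne_zero_iff.1 hx
  rw [(hasDerivAt_poschlTellerSuperpotential l l' hx).deriv,
    (hasDerivAt_poschlTellerSuperpotential (l + 1) (l' + 1) hx).deriv]
  unfold poschlTellerSuperpotential
  -- The cross terms `-2 l l' c t` and `-2 (l + 1) (l' + 1) c t` differ by `2 (l + l' + 1) c t`.
  linear_combination (1 / (2 * a)) ^ 2 * (2 * (l + l' + 1)) * cot_mul_tan hs hc

/-- Shape invariance of the Pöschl–Teller potentials of first type:
with `W_{l,l'}(x) = -(1/(2a))(l·cot(x/2a) - l'·tan(x/2a))`, one has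
`W_{l,l'}² + W_{l,l'}' = W_{l+1,l'+1}² - W_{l+1,l'+1}' + (l+l'+1)/a²` on `(0, πa)`,
i.e. `V₂(x; l, l') = V₁(x; l+1, l'+1) + (l+l'+1)/a²`. -/
theorem poschlTeller_shape_invariance
    (a l l' : ℝ) (ha : 0 < a) (W : ℝ → ℝ → ℝ → ℝ)
    (hW : W = fun l l' x => -(1 / (2 * a)) *
      (l * Real.cot (x / (2 * a)) - l' * Real.tan (x / (2 * a)))) :
    ∀ x ∈ Set.Ioo 0 (π * a),
      (W l l' x) ^ 2 + deriv (W l l') x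
        = (W (l + 1) (l' + 1) x) ^ 2 - deriv (W (l + 1) (l' + 1)) x
          + (l + l' + 1) / a ^ 2 := by
  rintro x ⟨hx_pos, hx_lt⟩
  have hsin : 0 < sin (x / a) :=
    sin_pos_of_mem_Ioo ⟨div_pos hx_pos ha, (div_lt_iff₀ ha).2 hx_lt⟩
  subst hW
  exact poschlTeller_shape_invariance_general l l' hsin.ne'
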